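/- Let n ≥ 1, A = ℤ[x]/(x^{n+1}), and B = A ⊗_ℤ A. The graded ring HH^*(A;A) = ⊕_{m≥0} Ext^m_B(A,A), with multiplication given by the Yoneda (composition) product, is isomorphic as a graded ring to ℤ[x,u,t]/(x^{n+1}, u², (n+1)x^n t, u x^n), where the generators x, u, t have cohomological degrees 0, 1, 2 respectively. -/

import Mathlib

open Polynomial TensorProduct CategoryTheory

noncomputable section

/-- `A = ℤ[x]/(x^{n+1})`, the truncated polynomial ring. -/
abbrev A (n : ℕ) : Type := AdjoinRoot ((X : ℤ[X]) ^ (n + 1))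

/-- `B = A ⊗_ℤ A`. -/
abbrev B (n : ℕ) : Type := A n ⊗[ℤ] A n

/-- `A` is a `B`-module via the multiplication map `μ(a ⊗ b) = ab`. -/
instance (n : ℕ) : Algebra (B n) (A n) :=
  (Algebra.TensorProduct.lmul' ℤ (S := A n)).toRingHom.toAlgebra

instance (n : ℕ) : HasDerivedCategory.{1} (ModuleCat.{0} (B n)) :=
  HasDerivedCategory.standard _

instance (n : ℕ) : HasExt.{1} (ModuleCat.{0} (B n)) :=
  hasExt_of_hasDerivedCategory _

/-- `A` as an object of the category of `B`-modules. -/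
def M (n : ℕ) : ModuleCat.{0} (B n) := ModuleCat.of (B n) (A n)

/-- The ideal `(x^{n+1}, u², (n+1)xⁿt, uxⁿ)` of `ℤ[x,u,t]`, where `x = X 0`, `u = X 1`,
`t = X 2`. -/
def I (n : ℕ) : Ideal (MvPolynomial (Fin 3) ℤ) :=
  Ideal.span {MvPolynomial.X 0 ^ (n + 1), MvPolynomial.X 1 ^ 2,
    ((n : MvPolynomial (Fin 3) ℤ) + 1) * MvPolynomial.X 0 ^ n * MvPolynomial.X 2,
    MvPolynomial.X 1 * MvPolynomial.X 0 ^ n}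

/-- The ring `ℤ[x,u,t]/(x^{n+1}, u², (n+1)xⁿt, uxⁿ)`. -/
abbrev R (n : ℕ) : Type := MvPolynomial (Fin 3) ℤ ⧸ I n

/-- The degree-`m` component of `R n`, for the grading in which `x, u, t` have
cohomological degrees `0, 1, 2` respectively: the image in the quotient of the submodule of
weighted homogeneous polynomials of weighted degree `m`, with weights `0, 1, 2`. -/
def G (n m : ℕ) : Submodule ℤ (R n) :=
  (MvPolynomial.weightedHomogeneousSubmodule ℤ (![0, 1, 2] : Fin 3 → ℕ) m).map
    (Ideal.Quotient.mkₐ ℤ (I n)).toLinearMap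

/-
Put `d = 1 ⊗ x - x ⊗ 1`, a generator of the kernel of `B → A`, and `D = ∑ xⁱ ⊗ xⁿ⁻ⁱ`. Each of `d`
and `D` generates the annihilator of the other, so there is an exact sequence
`0 → A → B → B → A → 0`, and splicing copies of it resolves `A`. Composition with its class `t` in
`Ext²` is then surjective, and injective in positive degrees, so that everything reduces to degrees
`0, 1, 2`: as `D` acts on `A` by `(n + 1)xⁿ`, the group `Ext^m` is the annihilator `(x)` of
`(n + 1)xⁿ` for odd `m`, and `A / ((n + 1)xⁿ)` for even `m > 0`, with generators `t^k u` and `t^k`,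
where `u` is the class in `Ext¹` which corresponds to `x`. It lifts to a chain map of degree one
with components `x ⊗ 1` and `f` alternately, where `d f = (x ⊗ 1) D`; this gives `u t = t u`, and
`u² = 0` because `(x ⊗ 1) f` maps to zero in `A`. In the quotient of `ℤ[x, u, t]` the monomials
`u t^k` and `t^k` multiply in the same way, and they have the same annihilators in `A`.
-/

/-- An exact pair of zero divisors: each of the two elements generates the annihilator of the
other, so that multiplication by `d` and by `D` alternate in a two-periodic free resolution of
`S / (d)`. -/
structure IsExactPair {S : Type*} [CommRing S] (d D : S) : Prop where
  mul_left_eq_zero_iff (b : S) : d * b = 0 ↔ D ∣ b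
  mul_right_eq_zero_iff (b : S) : D * b = 0 ↔ d ∣ b

namespace IsExactPair

lemma symm {S : Type*} [CommRing S] {d D : S} (h : IsExactPair d D) : IsExactPair D d :=
  ⟨h.mul_right_eq_zero_iff, h.mul_left_eq_zero_iff⟩

lemma mul_eq_zero {S : Type*} [CommRing S] {d D : S} (h : IsExactPair d D) : d * D = 0 :=
  (h.mul_left_eq_zero_iff D).2 dvd_rfl

lemma map {S T E : Type*} [CommRing S] [CommRing T] [EquivLike E S T] [RingEquivClass E S T]
    {d D : S} (h : IsExactPair d D) (e : E) : IsExactPair (e d) (e D) where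
  mul_left_eq_zero_iff b := by
    obtain ⟨b, rfl⟩ := EquivLike.surjective e b
    rw [← map_mul, map_eq_zero_iff e (EquivLike.injective e), map_dvd_iff e,
      h.mul_left_eq_zero_iff]
  mul_right_eq_zero_iff b := by
    obtain ⟨b, rfl⟩ := EquivLike.surjective e b
    rw [← map_mul, map_eq_zero_iff e (EquivLike.injective e), map_dvd_iff e,
      h.mul_right_eq_zero_iff]

end IsExactPair

section ExactPairOfFactorization

variable {P S : Type*} [CommRing P] [CommRing S]

lemma map_mul_eq_zero_iff_map_dvd (π : P →+* S) (hπ : Function.Surjective π) {a b : P}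
    (hker : ∀ c, π c = 0 ↔ a * b ∣ c) (ha : IsLeftRegular a) (s : S) :
    π a * s = 0 ↔ π b ∣ s := by
  obtain ⟨c, rfl⟩ := hπ s
  rw [← map_mul, hker]
  constructor
  · rintro ⟨e, he⟩
    exact map_dvd π ⟨e, ha (by simpa only [mul_assoc] using he)⟩
  · rintro ⟨s', hs'⟩
    obtain ⟨e, rfl⟩ := hπ s'
    rw [← map_mul, ← sub_eq_zero, ← map_sub, hker] at hs'
    exact mul_dvd_mul_left a
      ((dvd_sub_left (dvd_mul_right b e)).1 ((dvd_mul_left b a).trans hs'))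

theorem IsExactPair.of_ker_eq_mul (π : P →+* S) (hπ : Function.Surjective π) {a b : P}
    (hker : ∀ c, π c = 0 ↔ a * b ∣ c) (ha : IsLeftRegular a) (hb : IsLeftRegular b) :
    IsExactPair (π a) (π b) where
  mul_left_eq_zero_iff := map_mul_eq_zero_iff_map_dvd π hπ hker ha
  mul_right_eq_zero_iff :=
    map_mul_eq_zero_iff_map_dvd π hπ (fun c => by rw [hker, mul_comm]) hb

end ExactPairOfFactorization

/-- A presentation of the module `N` as `S / (d)`: a generator of `N` whose annihilator is the
principal ideal `(d)`. -/
structure CyclicPresentation {S : Type*} [CommRing S] (d : S) (N : ModuleCat S) where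
  gen : N
  exists_smul_gen (a : N) : ∃ s : S, s • gen = a
  smul_gen_eq_zero_iff (s : S) : s • gen = 0 ↔ d ∣ s

namespace CyclicPresentation

universe u

variable {S : Type u} [CommRing S] {d d' d'' : S} {N N' N'' : ModuleCat.{u} S}

/-- A quotient algebra of `S` with kernel `(d)`, presented by its unit element. -/
def ofAlgebra {Q : Type u} [CommRing Q] [Algebra S Q]
    (hsurj : Function.Surjective (algebraMap S Q))
    (hker : ∀ s, algebraMap S Q s = 0 ↔ d ∣ s) :
    CyclicPresentation d (ModuleCat.of S Q) where
  gen := (1 : Q)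
  exists_smul_gen a := (hsurj a).imp fun s hs =>
    (Algebra.algebraMap_eq_smul_one (A := Q) s).symm.trans hs
  smul_gen_eq_zero_iff s := by
    rw [← hker, Algebra.algebraMap_eq_smul_one]

variable (S) in
/-- The free module of rank one, presented as `S / (0)`. -/
def free : CyclicPresentation (0 : S) (ModuleCat.of S S) :=
  ofAlgebra Function.surjective_id fun _ => zero_dvd_iff.symm

/-- The tautological presentation of `S / (d)`. -/
def quotient (d : S) : CyclicPresentation d (ModuleCat.of S (S ⧸ Ideal.span {d})) :=
  ofAlgebra Ideal.Quotient.mk_surjective fun _ =>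
    Ideal.Quotient.eq_zero_iff_mem.trans Ideal.mem_span_singleton

lemma hom_ext (P : CyclicPresentation d N) {f g : N ⟶ N'} (h : f P.gen = g P.gen) :
    f = g := by
  ext a
  obtain ⟨s, rfl⟩ := P.exists_smul_gen a
  rw [map_smul, map_smul, h]

/-- The morphism `S / (d) ⟶ S / (d')` induced by multiplication by `b`. -/
def mulHom (P : CyclicPresentation d N) (P' : CyclicPresentation d' N') (b : S)
    (hb : d' ∣ d * b) : N ⟶ N' :=
  let p := LinearMap.toSpanSingleton S N P.gen
  ModuleCat.ofHom <|
    p.ker.liftQ (LinearMap.toSpanSingleton S N' (b • P'.gen))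
      (fun s hs => by
        have hds : d ∣ s := (P.smul_gen_eq_zero_iff s).1 hs
        rw [LinearMap.mem_ker, LinearMap.toSpanSingleton_apply, smul_smul,
          P'.smul_gen_eq_zero_iff]
        exact hb.trans (mul_dvd_mul_right hds b)) ∘ₗ
    (p.quotKerEquivOfSurjective P.exists_smul_gen).symm.toLinearMap

lemma mulHom_smul_gen (P : CyclicPresentation d N) (P' : CyclicPresentation d' N') {b : S}
    (hb : d' ∣ d * b) (s : S) :
    P.mulHom P' b hb (s • P.gen) = (s * b) • P'.gen := by
  have hs := LinearMap.quotKerEquivOfSurjective_symm_apply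
    (LinearMap.toSpanSingleton S N P.gen) P.exists_smul_gen s
  rw [LinearMap.toSpanSingleton_apply] at hs
  simp only [mulHom, ModuleCat.hom_ofHom, LinearMap.comp_apply, LinearEquiv.coe_coe]
  rw [hs, Submodule.liftQ_apply, LinearMap.toSpanSingleton_apply, smul_smul]

lemma mulHom_gen (P : CyclicPresentation d N) (P' : CyclicPresentation d' N') {b : S}
    (hb : d' ∣ d * b) : P.mulHom P' b hb P.gen = b • P'.gen := by
  simpa only [one_smul, one_mul] using P.mulHom_smul_gen P' hb 1

lemma mono_mulHom (P : CyclicPresentation d N) (P' : CyclicPresentation d' N') {b : S}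
    (hb : d' ∣ d * b) (h : ∀ s, d' ∣ s * b → d ∣ s) : Mono (P.mulHom P' b hb) := by
  rw [ModuleCat.mono_iff_injective, injective_iff_map_eq_zero]
  intro a ha
  obtain ⟨s, rfl⟩ := P.exists_smul_gen a
  rw [mulHom_smul_gen, P'.smul_gen_eq_zero_iff] at ha
  exact (P.smul_gen_eq_zero_iff s).2 (h s ha)

lemma epi_mulHom_one (P : CyclicPresentation d N) (P' : CyclicPresentation d' N')
    (h : d' ∣ d * 1) : Epi (P.mulHom P' 1 h) := by
  rw [ModuleCat.epi_iff_surjective]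
  intro a
  obtain ⟨s, rfl⟩ := P'.exists_smul_gen a
  exact ⟨s • P.gen, by rw [mulHom_smul_gen, mul_one]⟩

lemma exists_eq_mulHom (P : CyclicPresentation d N) (P' : CyclicPresentation d' N')
    (f : N ⟶ N') : ∃ b hb, f = P.mulHom P' b hb := by
  obtain ⟨b, hb⟩ := P'.exists_smul_gen (f P.gen)
  have hdb : d' ∣ d * b := by
    rw [← P'.smul_gen_eq_zero_iff, mul_smul, hb, ← map_smul,
      (P.smul_gen_eq_zero_iff d).2 dvd_rfl, map_zero]
  exact ⟨b, hdb, P.hom_ext ((P.mulHom_gen P' hdb).trans hb).symm⟩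

lemma mulHom_eq_mulHom_iff (P : CyclicPresentation d N) (P' : CyclicPresentation d' N') {b c : S}
    (hb : d' ∣ d * b) (hc : d' ∣ d * c) :
    P.mulHom P' b hb = P.mulHom P' c hc ↔ d' ∣ b - c := by
  rw [← P'.smul_gen_eq_zero_iff, sub_smul, sub_eq_zero, ← P.mulHom_gen P' hb,
    ← P.mulHom_gen P' hc]
  exact ⟨fun h => by rw [h], P.hom_ext⟩

lemma mulHom_eq_zero_iff (P : CyclicPresentation d N) (P' : CyclicPresentation d' N') {b : S}
    (hb : d' ∣ d * b) : P.mulHom P' b hb = 0 ↔ d' ∣ b := by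
  rw [← P'.smul_gen_eq_zero_iff, ← P.mulHom_gen P' hb]
  exact ⟨fun h => by rw [h]; rfl, fun h => P.hom_ext h⟩

lemma mulHom_comp_mulHom (P : CyclicPresentation d N) (P' : CyclicPresentation d' N')
    (P'' : CyclicPresentation d'' N'') {b c : S} (hb : d' ∣ d * b) (hc : d'' ∣ d' * c) :
    P.mulHom P' b hb ≫ P'.mulHom P'' c hc =
      P.mulHom P'' (b * c) (hc.trans (by simpa only [mul_assoc] using mul_dvd_mul_right hb c)) :=
  P.hom_ext <| by
    rw [ConcreteCategory.comp_apply, mulHom_gen, mulHom_smul_gen, mulHom_gen]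

lemma smul_mulHom (P : CyclicPresentation d N) (P' : CyclicPresentation d' N') {b : S}
    (hb : d' ∣ d * b) (s : S) :
    s • P.mulHom P' b hb =
      P.mulHom P' (s * b) (by simpa only [mul_left_comm] using hb.mul_left s) :=
  P.hom_ext <| by
    rw [mulHom_gen, mul_smul, ← P.mulHom_gen P' hb]
    rfl

lemma mulHom_one (P : CyclicPresentation d N) : P.mulHom P 1 (dvd_mul_right d 1) = 𝟙 N :=
  P.hom_ext <| by rw [mulHom_gen, one_smul, ConcreteCategory.id_apply]

end CyclicPresentation

section DimensionShifting

open Abelian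

universe w v u

variable {C : Type u} [Category.{v} C] [Abelian C] [HasExt.{w} C] {E : ShortComplex C} {Y : C}

lemma extClass_comp_mk₀_eq_zero_iff (h : E.ShortExact) (g : E.X₁ ⟶ Y) :
    h.extClass.comp (Ext.mk₀ g) (add_zero 1) = 0 ↔ ∃ k : E.X₂ ⟶ Y, E.f ≫ k = g := by
  constructor
  · intro hg
    obtain ⟨γ, hγ⟩ := Ext.contravariant_sequence_exact₁ h Y _ (add_zero 1) hg
    obtain ⟨k, rfl⟩ := (Ext.mk₀_bijective E.X₂ Y).2 γ
    rw [Ext.mk₀_comp_mk₀] at hγ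
    exact ⟨k, (Ext.mk₀_bijective E.X₁ Y).1 hγ⟩
  · rintro ⟨k, rfl⟩
    rw [← Ext.mk₀_comp_mk₀, h.extClass_comp_assoc (Ext.mk₀ k)]

variable [Projective E.X₂]

lemma exists_extClass_comp_eq (h : E.ShortExact) {m k : ℕ} (hmk : 1 + m = k)
    (α : Ext E.X₃ Y k) : ∃ β : Ext E.X₁ Y m, h.extClass.comp β hmk = α := by
  obtain rfl : k = m + 1 := by rw [← hmk, add_comm]
  exact Ext.contravariant_sequence_exact₃ h Y α (Ext.eq_zero_of_projective _) hmk

lemma extClass_comp_eq_zero_iff (h : E.ShortExact) {m k : ℕ} (hmk : 1 + (m + 1) = k)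
    (β : Ext E.X₁ Y (m + 1)) : h.extClass.comp β hmk = 0 ↔ β = 0 := by
  refine ⟨fun hβ => ?_, fun hβ => by rw [hβ, Ext.comp_zero]⟩
  obtain ⟨γ, rfl⟩ := Ext.contravariant_sequence_exact₁ h Y β hmk hβ
  rw [Ext.eq_zero_of_projective γ, Ext.comp_zero]

end DimensionShifting

namespace IsExactPair

open Abelian CyclicPresentation

universe w u

variable {S : Type u} [CommRing S] {d D : S} {N N' : ModuleCat.{u} S}

/-- The complex `S / (D) ⟶ S ⟶ S / (d)` whose maps are multiplication by `d` and the
projection. -/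
def shortComplex (h : IsExactPair d D) (P : CyclicPresentation d N)
    (P' : CyclicPresentation D N') : ShortComplex (ModuleCat.{u} S) :=
  .mk (P'.mulHom (free S) d (zero_dvd_iff.2 h.symm.mul_eq_zero))
    ((free S).mulHom P 1 ((dvd_zero d).mul_right 1))
    (by rw [mulHom_comp_mulHom, mulHom_eq_zero_iff, mul_one])

theorem shortExact (h : IsExactPair d D) (P : CyclicPresentation d N)
    (P' : CyclicPresentation D N') : (h.shortComplex P P').ShortExact :=
  have hd : (0 : S) ∣ D * d := zero_dvd_iff.2 h.symm.mul_eq_zero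
  have hp : d ∣ 0 * 1 := (dvd_zero d).mul_right 1
  .mk' ((ShortComplex.moduleCat_exact_iff _).2 fun a ha => by
      obtain ⟨s, rfl⟩ := (free S).exists_smul_gen a
      obtain ⟨b, rfl⟩ : d ∣ s := by
        have hs : (s * 1) • P.gen = 0 := ((free S).mulHom_smul_gen P hp s).symm.trans ha
        rwa [mul_one, P.smul_gen_eq_zero_iff] at hs
      exact ⟨b • P'.gen, (P'.mulHom_smul_gen (free S) hd b).trans (by rw [mul_comm])⟩)
    (P'.mono_mulHom (free S) hd fun s hs => by
      rwa [zero_dvd_iff, mul_comm, h.mul_left_eq_zero_iff] at hs)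
    ((free S).epi_mulHom_one P hp)

instance (h : IsExactPair d D) (P : CyclicPresentation d N) (P' : CyclicPresentation D N') :
    Projective (h.shortComplex P P').X₂ :=
  (IsProjective.iff_projective S).1 (inferInstanceAs (Module.Projective S S))

variable [HasExt.{w} (ModuleCat.{u} S)]

/-- The class in `Ext¹(S / (d), S / (D))` of the extension
`0 ⟶ S / (D) ⟶ S ⟶ S / (d) ⟶ 0`. -/
def extClass (h : IsExactPair d D) (P : CyclicPresentation d N)
    (P' : CyclicPresentation D N') : Ext N N' 1 :=
  (h.shortExact P P').extClass

lemma exists_extClass_comp_eq (h : IsExactPair d D) (P : CyclicPresentation d N)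
    (P' : CyclicPresentation D N') {Y : ModuleCat.{u} S} {m k : ℕ} (hmk : 1 + m = k)
    (α : Ext N Y k) : ∃ β : Ext N' Y m, (h.extClass P P').comp β hmk = α :=
  _root_.exists_extClass_comp_eq (h.shortExact P P') hmk α

lemma extClass_comp_eq_zero_iff (h : IsExactPair d D) (P : CyclicPresentation d N)
    (P' : CyclicPresentation D N') {Y : ModuleCat.{u} S} {m k : ℕ} (hmk : 1 + (m + 1) = k)
    (β : Ext N' Y (m + 1)) : (h.extClass P P').comp β hmk = 0 ↔ β = 0 :=
  _root_.extClass_comp_eq_zero_iff (h.shortExact P P') hmk β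

lemma extClass_comp_mk₀_mulHom_eq_zero_iff (h : IsExactPair d D) (P : CyclicPresentation d N)
    (P' : CyclicPresentation D N') {d'' : S} {N'' : ModuleCat.{u} S}
    (P'' : CyclicPresentation d'' N'') {b : S} (hb : d'' ∣ D * b) :
    (h.extClass P P').comp (Ext.mk₀ (P'.mulHom P'' b hb)) (add_zero 1) = 0 ↔
      b ∈ Ideal.span {d, d''} := by
  refine (extClass_comp_mk₀_eq_zero_iff (h.shortExact P P') _).trans ?_
  rw [Ideal.mem_span_pair]
  constructor
  · rintro ⟨k, hk⟩
    obtain ⟨c, hc, rfl⟩ := (free S).exists_eq_mulHom P'' k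
    simp only [shortComplex, mulHom_comp_mulHom, mulHom_eq_mulHom_iff] at hk
    obtain ⟨e, he⟩ := hk
    exact ⟨c, -e, by linear_combination he⟩
  · rintro ⟨c, e, rfl⟩
    refine ⟨(free S).mulHom P'' c ((dvd_zero d'').mul_right c), ?_⟩
    simp only [shortComplex, mulHom_comp_mulHom, mulHom_eq_mulHom_iff]
    exact ⟨-e, by ring⟩

lemma extClass_naturality {d₁ D₁ : S} {N₁ N₁' : ModuleCat.{u} S} (h : IsExactPair d D)
    (h₁ : IsExactPair d₁ D₁) (P : CyclicPresentation d N) (P' : CyclicPresentation D N')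
    (P₁ : CyclicPresentation d₁ N₁) (P₁' : CyclicPresentation D₁ N₁') {a b : S}
    (hab : d * b = a * d₁) (ha : D₁ ∣ D * a) (hb : d₁ ∣ d * b) :
    (h.extClass P P').comp (Ext.mk₀ (P'.mulHom P₁' a ha)) (add_zero 1) =
      (Ext.mk₀ (P.mulHom P₁ b hb)).comp (h₁.extClass P₁ P₁') (zero_add 1) :=
  (h.shortExact P P').extClass_naturality (h₁.shortExact P₁ P₁')
    { τ₁ := P'.mulHom P₁' a ha
      τ₂ := (free S).mulHom (free S) b (by rw [zero_mul])
      τ₃ := P.mulHom P₁ b hb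
      comm₁₂ := by simp only [shortComplex, mulHom_comp_mulHom, hab]
      comm₂₃ := by simp only [shortComplex, mulHom_comp_mulHom, mul_one, one_mul] }

end IsExactPair

section ExtMonomial

open Abelian

universe w v u

variable {C : Type u} [Category.{v} C] [Abelian C] [HasExt.{w} C] {Y : C}

/-- The family `1, u, t, tu, t², t²u, …` of Yoneda products of a degree two class `t` and a degree
one class `u`. -/
def extMonomial (t : Ext Y Y 2) (u : Ext Y Y 1) : ∀ m : ℕ, Ext Y Y m
  | 0 => Ext.mk₀ (𝟙 Y)
  | 1 => u
  | m + 2 => t.comp (extMonomial t u m) (add_comm 2 m)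

variable {t : Ext Y Y 2} {u : Ext Y Y 1}

lemma comp_extMonomial (htu : u.comp t (rfl : 1 + 2 = 3) = t.comp u (rfl : 2 + 1 = 3))
    (huu : u.comp u (rfl : 1 + 1 = 2) = 0) {b c : ℕ} (h : 1 + b = c) :
    u.comp (extMonomial t u b) h = if Odd b then 0 else extMonomial t u c := by
  induction b using Nat.twoStepInduction generalizing c with
  | zero => subst h; exact Ext.comp_mk₀_id u
  | one => subst h; rw [if_pos odd_one]; exact huu
  | more b ih _ =>
    obtain ⟨c, rfl⟩ : ∃ c', c = c' + 2 := ⟨1 + b, by lia⟩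
    have hbc : 1 + b = c := by lia
    have hodd : Odd (b + 2) ↔ Odd b := by grind
    simp only [extMonomial, hodd]
    rw [← Ext.comp_assoc u t _ rfl _ (by lia), htu, Ext.comp_assoc t u _ _ hbc (by lia), ih,
      apply_ite (t.comp · (add_comm 2 c)), Ext.comp_zero]

theorem extMonomial_comp_extMonomial
    (htu : u.comp t (rfl : 1 + 2 = 3) = t.comp u (rfl : 2 + 1 = 3))
    (huu : u.comp u (rfl : 1 + 1 = 2) = 0) {a b c : ℕ} (h : a + b = c) :
    (extMonomial t u a).comp (extMonomial t u b) h =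
      if Odd a ∧ Odd b then 0 else extMonomial t u c := by
  induction a using Nat.twoStepInduction generalizing c with
  | zero =>
    obtain rfl : b = c := by lia
    rw [if_neg (by simp)]
    exact Ext.mk₀_id_comp _
  | one => simpa only [extMonomial, odd_one, true_and] using comp_extMonomial htu huu h
  | more a ih _ =>
    obtain ⟨c, rfl⟩ : ∃ c', c = c' + 2 := ⟨a + b, by lia⟩
    have hac : a + b = c := by lia
    have hodd : Odd (a + 2) ↔ Odd a := by grind
    simp only [extMonomial, hodd]
    rw [Ext.comp_assoc t _ _ _ hac (by lia), ih, apply_ite (t.comp · (add_comm 2 c)),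
      Ext.comp_zero]

end ExtMonomial

lemma CyclicPresentation.smul_mk₀_id.{w, u} {S : Type u} [CommRing S] [HasExt.{w} (ModuleCat.{u} S)]
    {d : S} {N : ModuleCat.{u} S} (P : CyclicPresentation d N) (s : S) :
    s • Abelian.Ext.mk₀ (𝟙 N) = Abelian.Ext.mk₀ (P.mulHom P s (dvd_mul_right d s)) := by
  rw [← Abelian.Ext.mk₀_smul, ← P.mulHom_one, smul_mulHom]
  simp only [mul_one]

namespace IsExactPair

open Abelian CyclicPresentation

universe w u

variable {S : Type u} [CommRing S] [HasExt.{w} (ModuleCat.{u} S)] {d D y f : S}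
  {N N' : ModuleCat.{u} S}

/-- The class in `Ext²(S / (d), S / (d))` of the two-periodic resolution, that is, of the extension
`0 ⟶ S / (d) ⟶ S ⟶ S ⟶ S / (d) ⟶ 0`. -/
def periodClass (h : IsExactPair d D) (P : CyclicPresentation d N)
    (P' : CyclicPresentation D N') : Ext N N 2 :=
  (h.extClass P P').comp (h.symm.extClass P' P) (rfl : 1 + 1 = 2)

/-- The class in `Ext¹(S / (d), S / (d))` obtained from the extension class by pushing it out along
multiplication by `y`, a map `S / (D) ⟶ S / (d)`. -/
def oddClass (h : IsExactPair d D) (P : CyclicPresentation d N) (P' : CyclicPresentation D N')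
    (hy : d ∣ D * y) : Ext N N 1 :=
  (h.extClass P P').comp (Ext.mk₀ (P'.mulHom P y hy)) (add_zero 1)

variable (h : IsExactPair d D) (P : CyclicPresentation d N) (P' : CyclicPresentation D N')

lemma periodClass_comp {Y : ModuleCat.{u} S} {m k : ℕ} (hmk : 2 + m = k) (α : Ext N Y m) :
    (h.periodClass P P').comp α hmk =
      (h.extClass P P').comp ((h.symm.extClass P' P).comp α (rfl : 1 + m = 1 + m))
        (by lia) :=
  Ext.comp_assoc _ _ _ _ _ (by lia)

lemma exists_periodClass_comp_eq {Y : ModuleCat.{u} S} {m : ℕ} (α : Ext N Y (m + 2)) :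
    ∃ β : Ext N Y m, (h.periodClass P P').comp β (add_comm 2 m) = α := by
  have hm : 1 + (1 + m) = m + 2 := by lia
  obtain ⟨γ, hγ⟩ := h.exists_extClass_comp_eq P P' hm α
  obtain ⟨β, hβ⟩ := h.symm.exists_extClass_comp_eq P' P rfl γ
  exact ⟨β, by rw [periodClass_comp, hβ, hγ]⟩

lemma periodClass_comp_eq_zero_iff {Y : ModuleCat.{u} S} {m k : ℕ} (hmk : 2 + (m + 1) = k)
    (β : Ext N Y (m + 1)) : (h.periodClass P P').comp β hmk = 0 ↔ β = 0 := by
  have hm : 1 + (1 + m + 1) = k := by lia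
  rw [periodClass_comp]
  exact (h.extClass_comp_eq_zero_iff P P' hm _).trans
    (h.symm.extClass_comp_eq_zero_iff P' P rfl β)

lemma periodClass_comp_mk₀_mulHom_eq_zero_iff {d'' : S} {N'' : ModuleCat.{u} S}
    (P'' : CyclicPresentation d'' N'') {b : S} (hb : d'' ∣ d * b) :
    (h.periodClass P P').comp (Ext.mk₀ (P.mulHom P'' b hb)) (add_zero 2) = 0 ↔
      b ∈ Ideal.span {D, d''} := by
  rw [periodClass_comp, ← h.symm.extClass_comp_mk₀_mulHom_eq_zero_iff P' P P'' hb]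
  exact h.extClass_comp_eq_zero_iff P P' rfl _

section Products

variable (hf : d * f = y * D) (hy : d ∣ D * y)

include hf

lemma extClass_comp_mk₀_mulHom :
    (h.extClass P P').comp (Ext.mk₀ (P'.mulHom P y hy)) (add_zero 1) =
      (Ext.mk₀ (P.mulHom P' f (hf ▸ dvd_mul_left D y))).comp (h.symm.extClass P' P)
        (zero_add 1) :=
  h.extClass_naturality h.symm P P' P' P hf hy _

lemma symm_extClass_comp_mk₀_mulHom :
    (h.symm.extClass P' P).comp (Ext.mk₀ (P.mulHom P' f (hf ▸ dvd_mul_left D y))) (add_zero 1) =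
      (Ext.mk₀ (P'.mulHom P y hy)).comp (h.extClass P P') (zero_add 1) :=
  h.symm.extClass_naturality h P' P P P' (by linear_combination -hf) _ hy

theorem oddClass_comp_periodClass :
    (h.oddClass P P' hy).comp (h.periodClass P P') (rfl : 1 + 2 = 3) =
      (h.periodClass P P').comp (h.oddClass P P' hy) (rfl : 2 + 1 = 3) := by
  rw [periodClass_comp, oddClass, periodClass,
    Ext.comp_assoc _ _ _ (add_zero 1) (zero_add 2) (by lia),
    ← Ext.comp_assoc _ (h.extClass P P') _ (zero_add 1) rfl (by lia),
    ← h.symm_extClass_comp_mk₀_mulHom P P' hf hy, h.extClass_comp_mk₀_mulHom P P' hf hy,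
    Ext.comp_assoc _ _ _ (add_zero 1) (zero_add 1) (by lia)]

theorem oddClass_comp_oddClass (hyf : d ∣ f * y) :
    (h.oddClass P P' hy).comp (h.oddClass P P' hy) (rfl : 1 + 1 = 2) = 0 := by
  rw [oddClass, Ext.comp_assoc _ _ _ (add_zero 1) (zero_add 1) (by lia),
    ← Ext.comp_assoc _ (h.extClass P P') _ (zero_add 1) (add_zero 1) (by lia),
    ← h.symm_extClass_comp_mk₀_mulHom P P' hf hy,
    Ext.comp_assoc _ _ _ (add_zero 1) (zero_add 0) (by lia), Ext.mk₀_comp_mk₀,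
    mulHom_comp_mulHom, (P.mulHom_eq_zero_iff P _).2 hyf, Ext.mk₀_zero, Ext.comp_zero,
    Ext.comp_zero]

end Products

lemma smul_oddClass (hy : d ∣ D * y) (s : S) :
    s • h.oddClass P P' hy =
      h.oddClass P P' (y := s * y) (by simpa only [mul_left_comm] using hy.mul_left s) := by
  rw [oddClass, ← Ext.comp_smul, ← Ext.mk₀_smul, smul_mulHom, oddClass]

theorem exists_smul_extMonomial_eq (hy : d ∣ D * y)
    (hcolon : ∀ b, d ∣ D * b → b ∈ Ideal.span {d, y}) {m : ℕ} (α : Ext N N m) :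
    ∃ s : S, s • extMonomial (h.periodClass P P') (h.oddClass P P' hy) m = α := by
  induction m using Nat.twoStepInduction with
  | zero =>
    obtain ⟨g, rfl⟩ := (Ext.mk₀_bijective N N).2 α
    obtain ⟨s, -, rfl⟩ := P.exists_eq_mulHom P g
    exact ⟨s, P.smul_mk₀_id s⟩
  | one =>
    obtain ⟨β, rfl⟩ := h.exists_extClass_comp_eq P P' (add_zero 1) α
    obtain ⟨g, rfl⟩ := (Ext.mk₀_bijective N' N).2 β
    obtain ⟨b, hb, rfl⟩ := P'.exists_eq_mulHom P g
    obtain ⟨c, s, rfl⟩ := Ideal.mem_span_pair.1 (hcolon b hb)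
    refine ⟨s, (h.smul_oddClass P P' hy s).trans ?_⟩
    rw [oddClass, (P'.mulHom_eq_mulHom_iff P _ hb).2 ⟨-c, by ring⟩]
  | more m ih _ =>
    obtain ⟨β, rfl⟩ := h.exists_periodClass_comp_eq P P' α
    obtain ⟨s, rfl⟩ := ih β
    exact ⟨s, (Ext.comp_smul ..).symm⟩

lemma smul_extMonomial_add_two (hy : d ∣ D * y) (s : S) (m : ℕ) :
    s • extMonomial (h.periodClass P P') (h.oddClass P P' hy) (m + 2) =
      (h.periodClass P P').comp
        (s • extMonomial (h.periodClass P P') (h.oddClass P P' hy) m) (add_comm 2 m) :=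
  (Ext.comp_smul ..).symm

theorem smul_extMonomial_zero_eq_zero_iff (hy : d ∣ D * y) (s : S) :
    s • extMonomial (h.periodClass P P') (h.oddClass P P' hy) 0 = 0 ↔ d ∣ s := by
  rw [extMonomial, P.smul_mk₀_id, Ext.mk₀_eq_zero_iff, mulHom_eq_zero_iff]

theorem smul_extMonomial_odd_eq_zero_iff (hy : d ∣ D * y) (s : S) (k : ℕ) :
    s • extMonomial (h.periodClass P P') (h.oddClass P P' hy) (2 * k + 1) = 0 ↔ d ∣ s * y := by
  induction k with
  | zero =>
    rw [extMonomial, smul_oddClass, oddClass, extClass_comp_mk₀_mulHom_eq_zero_iff,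
      Set.pair_eq_singleton, Ideal.mem_span_singleton]
  | succ k ih =>
    rw [← ih]
    exact (h.smul_extMonomial_add_two P P' hy s (2 * k + 1)).symm ▸
      h.periodClass_comp_eq_zero_iff P P' _ _

theorem smul_extMonomial_even_eq_zero_iff (hy : d ∣ D * y) (s : S) (k : ℕ) :
    s • extMonomial (h.periodClass P P') (h.oddClass P P' hy) (2 * k + 2) = 0 ↔
      s ∈ Ideal.span {D, d} := by
  induction k with
  | zero =>
    rw [smul_extMonomial_add_two, extMonomial, P.smul_mk₀_id,
      periodClass_comp_mk₀_mulHom_eq_zero_iff]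
  | succ k ih =>
    rw [← ih]
    exact (h.smul_extMonomial_add_two P P' hy s (2 * k + 2)).symm ▸
      h.periodClass_comp_eq_zero_iff P P' _ _

end IsExactPair

section GeomSum

open Finset

/-- The divided difference `(z ^ m - w ^ m) / (z - w)`, as a polynomial in `z` and `w`. -/
def geomSum₂ {S : Type*} [CommRing S] (z w : S) (m : ℕ) : S :=
  ∑ i ∈ range m, z ^ i * w ^ (m - 1 - i)

/-- The polynomial `f` in `z` and `w` with `(z - w) * f = w * (z ^ m - w ^ m) / (z - w)` modulo
`w ^ m`, see `sub_mul_geomSum₂Quot`. -/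
def geomSum₂Quot {S : Type*} [CommRing S] (z w : S) (m : ℕ) : S :=
  ∑ i ∈ range m, w ^ (m - i) * geomSum₂ z w i

variable {S T : Type*} [CommRing S] [CommRing T]

lemma sub_mul_geomSum₂ (z w : S) (m : ℕ) : (z - w) * geomSum₂ z w m = z ^ m - w ^ m := by
  rw [mul_comm]
  exact geom_sum₂_mul z w m

lemma map_geomSum₂ {F : Type*} [FunLike F S T] [RingHomClass F S T] (φ : F) (z w : S)
    (m : ℕ) :
    φ (geomSum₂ z w m) = geomSum₂ (φ z) (φ w) m := by
  simp only [geomSum₂, map_sum, map_mul, map_pow]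

lemma geomSum₂_self (z : S) (m : ℕ) : geomSum₂ z z m = m * z ^ (m - 1) :=
  geom_sum₂_self z m

lemma map_geomSum₂Quot {F : Type*} [FunLike F S T] [RingHomClass F S T] (φ : F) (z w : S)
    (m : ℕ) :
    φ (geomSum₂Quot z w m) = geomSum₂Quot (φ z) (φ w) m := by
  simp only [geomSum₂Quot, map_sum, map_mul, map_pow, map_geomSum₂]

lemma sub_mul_geomSum₂Quot (z : S) {w : S} {m : ℕ} (hw : w ^ m = 0) :
    (z - w) * geomSum₂Quot z w m = w * geomSum₂ z w m := by
  rw [geomSum₂Quot, geomSum₂.eq_1 z w m, mul_sum, mul_sum]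
  refine sum_congr rfl fun i hi => ?_
  have him : m - i = (m - 1 - i) + 1 := by rw [mem_range] at hi; lia
  have hwm : w ^ (m - i) * w ^ i = 0 := by
    rw [← pow_add, Nat.sub_add_cancel (mem_range_le hi), hw]
  calc (z - w) * (w ^ (m - i) * geomSum₂ z w i)
      = w ^ (m - i) * (z ^ i - w ^ i) := by rw [mul_left_comm, sub_mul_geomSum₂]
    _ = w * (z ^ i * w ^ (m - 1 - i)) := by rw [mul_sub, hwm, him]; ring

lemma geomSum₂Quot_self_mul {z : S} {m : ℕ} (hz : z ^ m = 0) : geomSum₂Quot z z m * z = 0 := by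
  rw [geomSum₂Quot, sum_mul]
  refine sum_eq_zero fun i hi => ?_
  rcases i with _ | i
  · rw [geomSum₂_self, Nat.cast_zero, zero_mul, mul_zero, zero_mul]
  · have him : m - (i + 1) + i + 1 = m := by rw [mem_range] at hi; lia
    calc z ^ (m - (i + 1)) * geomSum₂ z z (i + 1) * z
        = (i + 1 : ℕ) * z ^ (m - (i + 1) + i + 1) := by
          rw [geomSum₂_self, Nat.add_sub_cancel]; ring
      _ = 0 := by rw [him, hz, mul_zero]

end GeomSum

section TruncatedPolynomial

variable {k Q : Type*} [CommRing k] [CommRing Q] [Algebra k Q]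

theorem isExactPair_root_pow (n : ℕ) :
    IsExactPair (AdjoinRoot.root ((X : k[X]) ^ (n + 1)))
      (AdjoinRoot.root ((X : k[X]) ^ (n + 1)) ^ n) := by
  simpa only [map_pow, AdjoinRoot.mk_X] using
    IsExactPair.of_ker_eq_mul (AdjoinRoot.mk ((X : k[X]) ^ (n + 1))) AdjoinRoot.mk_surjective
      (fun c => by rw [AdjoinRoot.mk_eq_zero, pow_succ'])
      monic_X.isRegular.left (monic_X_pow n).isRegular.left

lemma monic_geomSum₂_X_C (x : Q) (m : ℕ) (hx : x ^ m = 0) : (geomSum₂ X (C x) m).Monic :=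
  (monic_X_sub_C x).of_mul_monic_left <| by
    rw [sub_mul_geomSum₂, ← C_pow, hx, C_0, sub_zero]
    exact monic_X_pow m

theorem isExactPair_root_sub_of {x : Q} {m : ℕ} (hx : x ^ m = 0) :
    IsExactPair (AdjoinRoot.root ((X : Q[X]) ^ m) - AdjoinRoot.of _ x)
      (geomSum₂ (AdjoinRoot.root ((X : Q[X]) ^ m)) (AdjoinRoot.of _ x) m) := by
  have hker (c : Q[X]) : AdjoinRoot.mk (X ^ m) c = 0 ↔ (X - C x) * geomSum₂ X (C x) m ∣ c := by
    rw [sub_mul_geomSum₂, ← C_pow, hx, C_0, sub_zero, AdjoinRoot.mk_eq_zero]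
  have hpair := IsExactPair.of_ker_eq_mul _ AdjoinRoot.mk_surjective hker
    (monic_X_sub_C x).isRegular.left (monic_geomSum₂_X_C x m hx).isRegular.left
  rwa [map_sub, map_geomSum₂, AdjoinRoot.mk_X, AdjoinRoot.mk_C] at hpair

theorem isExactPair_tmul_root_sub {x : Q} {m : ℕ} (hx : x ^ m = 0) :
    IsExactPair ((1 : Q) ⊗ₜ[k] AdjoinRoot.root ((X : k[X]) ^ m) - x ⊗ₜ 1)
      (geomSum₂ ((1 : Q) ⊗ₜ[k] AdjoinRoot.root ((X : k[X]) ^ m)) (x ⊗ₜ 1) m) := by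
  let c : Q ⊗[k] k := x ⊗ₜ 1
  have hc : c ^ m = 0 := by
    rw [Algebra.TensorProduct.tmul_pow, hx, TensorProduct.zero_tmul]
  let e : AdjoinRoot ((X : (Q ⊗[k] k)[X]) ^ m) ≃ₐ[Q] Q ⊗[k] AdjoinRoot ((X : k[X]) ^ m) :=
    (AdjoinRoot.tensorAlgEquiv _ _ (by rw [Polynomial.map_pow, map_X])).symm
  have hroot : e (AdjoinRoot.root _) = 1 ⊗ₜ AdjoinRoot.root _ :=
    (AlgEquiv.symm_apply_eq _).2 (AdjoinRoot.tensorAlgEquiv_root ..).symm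
  have hof : e (AdjoinRoot.of _ c) = x ⊗ₜ 1 := e.commutes x
  have hpair := (isExactPair_root_sub_of hc).map e
  rwa [map_sub, map_geomSum₂, hroot, hof] at hpair

lemma aeval_tmul_root_surjective (p : k[X]) :
    Function.Surjective (aeval (R := Q) ((1 : Q) ⊗ₜ[k] AdjoinRoot.root p)) := by
  intro b
  induction b with
  | zero => exact ⟨0, map_zero _⟩
  | add b c hb hc =>
    obtain ⟨⟨P, rfl⟩, ⟨P', rfl⟩⟩ := hb, hc
    exact ⟨P + P', map_add ..⟩
  | tmul a c =>
    obtain ⟨P, rfl⟩ := AdjoinRoot.mk_surjective c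
    refine ⟨C a * P.map (algebraMap k Q), ?_⟩
    have hP : aeval ((1 : Q) ⊗ₜ[k] AdjoinRoot.root p) P = 1 ⊗ₜ AdjoinRoot.mk p P := by
      rw [← AdjoinRoot.aeval_eq]
      exact aeval_algHom_apply Algebra.TensorProduct.includeRight _ P
    rw [map_mul, aeval_C, aeval_map_algebraMap, hP, Algebra.TensorProduct.algebraMap_apply,
      Algebra.TensorProduct.tmul_mul_tmul, one_mul, mul_one, Algebra.algebraMap_self_apply]

end TruncatedPolynomial

section Augmentation

variable {S Q : Type*} [CommRing S] [CommRing Q]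

lemma algHom_eq_zero_iff_sub_dvd [Algebra Q S] (ε : S →ₐ[Q] Q) {z : S}
    (hz : Function.Surjective (aeval (R := Q) z)) (b : S) :
    ε b = 0 ↔ z - algebraMap Q S (ε z) ∣ b := by
  constructor
  · intro hb
    obtain ⟨P, rfl⟩ := hz b
    rw [← aeval_algHom_apply, coe_aeval_eq_eval, ← IsRoot.def, ← dvd_iff_isRoot] at hb
    simpa only [map_sub, aeval_X, aeval_C] using map_dvd (aeval z) hb
  · rintro ⟨c, rfl⟩
    rw [map_mul, map_sub, ε.commutes, Algebra.algebraMap_self_apply, sub_self, zero_mul]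

lemma mem_span_pair_iff_map_dvd_map (ε : S →+* Q) (hε : Function.Surjective ε) {d : S}
    (hker : ∀ b, ε b = 0 ↔ d ∣ b) (b y : S) :
    b ∈ Ideal.span {d, y} ↔ ε y ∣ ε b := by
  rw [Ideal.mem_span_pair]
  constructor
  · rintro ⟨a, c, rfl⟩
    have hd : ε (a * d) = 0 := (hker _).2 (dvd_mul_left d a)
    rw [map_add, hd, zero_add]
    exact map_dvd ε (dvd_mul_left y c)
  · rintro ⟨e, he⟩
    obtain ⟨c, rfl⟩ := hε e
    rw [← map_mul, ← sub_eq_zero, ← map_sub, hker] at he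
    obtain ⟨a, ha⟩ := he
    exact ⟨a, c, by linear_combination -ha⟩

end Augmentation

namespace A

/-- The class of `x` in `A n`. -/
abbrev x (n : ℕ) : A n := AdjoinRoot.root _

variable (n : ℕ)

lemma x_pow_succ : x n ^ (n + 1) = 0 := by
  rw [x, ← AdjoinRoot.mk_X, ← map_pow, AdjoinRoot.mk_self]

lemma aeval_x_surjective : Function.Surjective (aeval (R := ℤ) (x n)) := fun a => by
  obtain ⟨p, rfl⟩ := AdjoinRoot.mk_surjective a
  exact ⟨p, AdjoinRoot.aeval_eq p⟩

lemma x_dvd_natCast_succ_mul_iff (a : A n) : x n ∣ ((n : A n) + 1) * a ↔ x n ∣ a := by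
  let ε : A n →ₐ[ℤ] ℤ := AdjoinRoot.liftAlgHom _ (Algebra.ofId ℤ ℤ) 0 <| by
    rw [eval₂_pow, eval₂_X, zero_pow n.succ_ne_zero]
  have hε (b : A n) : x n ∣ b ↔ ε b = 0 := by
    rw [algHom_eq_zero_iff_sub_dvd ε (aeval_x_surjective n), AdjoinRoot.liftAlgHom_root, map_zero,
      sub_zero]
  have hn : (n : ℤ) + 1 ≠ 0 := n.cast_add_one_ne_zero
  rw [hε, hε, map_mul, map_add, map_natCast, map_one, mul_eq_zero_iff_left hn]

lemma natCast_succ_mul_x_pow_mul_eq_zero_iff (a : A n) :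
    ((n : A n) + 1) * x n ^ n * a = 0 ↔ x n ∣ a := by
  rw [mul_right_comm, mul_comm, (isExactPair_root_pow n).mul_right_eq_zero_iff,
    x_dvd_natCast_succ_mul_iff]

end A

namespace B

variable (n : ℕ)

/-- The element `x ⊗ 1`. -/
abbrev xl : B n := A.x n ⊗ₜ 1

/-- The element `1 ⊗ x`. -/
abbrev xr : B n := 1 ⊗ₜ A.x n

/-- The generator `1 ⊗ x - x ⊗ 1` of the kernel of the multiplication map. -/
def diff : B n := xr n - xl n

/-- The generator `∑ xⁱ ⊗ xⁿ⁻ⁱ` of the annihilator of `diff n`. -/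
def norm : B n := geomSum₂ (xr n) (xl n) (n + 1)

theorem isExactPair_diff_norm : IsExactPair (diff n) (norm n) :=
  isExactPair_tmul_root_sub (A.x_pow_succ n)

lemma algebraMap_surjective : Function.Surjective (algebraMap (B n) (A n)) := fun a =>
  ⟨a ⊗ₜ 1, (Algebra.TensorProduct.lmul'_apply_tmul a 1).trans (mul_one a)⟩

lemma algebraMap_xl : algebraMap (B n) (A n) (xl n) = A.x n :=
  (Algebra.TensorProduct.lmul'_apply_tmul _ _).trans (mul_one _)

lemma algebraMap_xr : algebraMap (B n) (A n) (xr n) = A.x n :=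
  (Algebra.TensorProduct.lmul'_apply_tmul _ _).trans (one_mul _)

lemma algebraMap_norm : algebraMap (B n) (A n) (norm n) = ((n : A n) + 1) * A.x n ^ n := by
  rw [norm, map_geomSum₂, algebraMap_xl, algebraMap_xr, geomSum₂_self, Nat.cast_succ,
    Nat.add_sub_cancel]

lemma algebraMap_eq_zero_iff (s : B n) : algebraMap (B n) (A n) s = 0 ↔ diff n ∣ s := by
  have hxr : Algebra.TensorProduct.lmul'' ℤ (xr n) = A.x n := algebraMap_xr n
  have hker := algHom_eq_zero_iff_sub_dvd (Algebra.TensorProduct.lmul'' ℤ (S := A n))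
    (aeval_tmul_root_surjective _) s
  rw [hxr] at hker
  exact hker

lemma mem_span_diff_iff (s y : B n) :
    s ∈ Ideal.span {diff n, y} ↔ algebraMap (B n) (A n) y ∣ algebraMap (B n) (A n) s :=
  mem_span_pair_iff_map_dvd_map _ (algebraMap_surjective n) (algebraMap_eq_zero_iff n) s y

lemma diff_dvd_norm_mul_iff (s : B n) :
    diff n ∣ norm n * s ↔ A.x n ∣ algebraMap (B n) (A n) s := by
  rw [← algebraMap_eq_zero_iff, map_mul, algebraMap_norm,
    A.natCast_succ_mul_x_pow_mul_eq_zero_iff]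

lemma diff_dvd_norm_mul_xl : diff n ∣ norm n * xl n := by
  rw [diff_dvd_norm_mul_iff, algebraMap_xl]

lemma mem_span_diff_xl_of_dvd (s : B n) (h : diff n ∣ norm n * s) :
    s ∈ Ideal.span {diff n, xl n} := by
  rwa [mem_span_diff_iff, algebraMap_xl, ← diff_dvd_norm_mul_iff]

lemma diff_dvd_mul_xl_iff (s : B n) :
    diff n ∣ s * xl n ↔ A.x n ^ n ∣ algebraMap (B n) (A n) s := by
  rw [← algebraMap_eq_zero_iff, mul_comm, map_mul, algebraMap_xl,
    (isExactPair_root_pow n).mul_left_eq_zero_iff]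

lemma xl_pow_succ : xl n ^ (n + 1) = 0 := by
  rw [Algebra.TensorProduct.tmul_pow, A.x_pow_succ, TensorProduct.zero_tmul]

lemma diff_mul_geomSum₂Quot :
    diff n * geomSum₂Quot (xr n) (xl n) (n + 1) = xl n * norm n :=
  sub_mul_geomSum₂Quot _ (xl_pow_succ n)

lemma diff_dvd_geomSum₂Quot_mul_xl : diff n ∣ geomSum₂Quot (xr n) (xl n) (n + 1) * xl n := by
  rw [← algebraMap_eq_zero_iff, map_mul, map_geomSum₂Quot, algebraMap_xl, algebraMap_xr,
    geomSum₂Quot_self_mul (A.x_pow_succ n)]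

end B

/-- The module `M n` is `B / (1 ⊗ x - x ⊗ 1)`. -/
def presentation (n : ℕ) : CyclicPresentation (B.diff n) (M n) :=
  .ofAlgebra (B.algebraMap_surjective n) (B.algebraMap_eq_zero_iff n)

namespace Hochschild

open Abelian B

variable (n : ℕ)

/-- The Hochschild class of degree `2` given by the two-periodic resolution. -/
def t : Ext (M n) (M n) 2 :=
  (isExactPair_diff_norm n).periodClass (presentation n) (.quotient (norm n))

/-- The Hochschild class of degree `1` given by multiplication by `x`. -/
def u : Ext (M n) (M n) 1 :=
  (isExactPair_diff_norm n).oddClass (presentation n) (.quotient (norm n))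
    (diff_dvd_norm_mul_xl n)

/-- The class `t ^ k` in degree `m = 2 * k`, and the class `t ^ k * u` in degree
`m = 2 * k + 1`. -/
def monomial (m : ℕ) : Ext (M n) (M n) m :=
  extMonomial (t n) (u n) m

theorem smul_monomial_comp_smul_monomial (a b : ℕ) (s s' : B n) :
    (s • monomial n a).comp (s' • monomial n b) rfl =
      if Odd a ∧ Odd b then 0 else (s * s') • monomial n (a + b) := by
  have htu := (isExactPair_diff_norm n).oddClass_comp_periodClass (presentation n)
    (.quotient _) (diff_mul_geomSum₂Quot n) (diff_dvd_norm_mul_xl n)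
  have huu := (isExactPair_diff_norm n).oddClass_comp_oddClass (presentation n)
    (.quotient _) (diff_mul_geomSum₂Quot n) (diff_dvd_norm_mul_xl n)
    (diff_dvd_geomSum₂Quot_mul_xl n)
  rw [Ext.smul_comp, Ext.comp_smul, smul_smul]
  refine (congrArg ((s * s') • ·) (extMonomial_comp_extMonomial htu huu rfl)).trans ?_
  rw [smul_ite, smul_zero]
  rfl

theorem exists_smul_monomial_eq {m : ℕ} (α : Ext (M n) (M n) m) :
    ∃ s : B n, s • monomial n m = α :=
  (isExactPair_diff_norm n).exists_smul_extMonomial_eq (presentation n) (.quotient _)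
    (diff_dvd_norm_mul_xl n) (mem_span_diff_xl_of_dvd n) α

theorem smul_monomial_zero_eq_zero_iff (s : B n) :
    s • monomial n 0 = 0 ↔ algebraMap (B n) (A n) s = 0 := by
  rw [algebraMap_eq_zero_iff]
  exact (isExactPair_diff_norm n).smul_extMonomial_zero_eq_zero_iff (presentation n)
    (.quotient _) (diff_dvd_norm_mul_xl n) s

theorem smul_monomial_odd_eq_zero_iff (s : B n) (k : ℕ) :
    s • monomial n (2 * k + 1) = 0 ↔ A.x n ^ n ∣ algebraMap (B n) (A n) s := by
  rw [← diff_dvd_mul_xl_iff]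
  exact (isExactPair_diff_norm n).smul_extMonomial_odd_eq_zero_iff (presentation n)
    (.quotient _) (diff_dvd_norm_mul_xl n) s k

theorem smul_monomial_even_eq_zero_iff (s : B n) (k : ℕ) :
    s • monomial n (2 * k + 2) = 0 ↔
      ((n : A n) + 1) * A.x n ^ n ∣ algebraMap (B n) (A n) s := by
  rw [← algebraMap_norm, ← mem_span_diff_iff, Set.pair_comm]
  exact (isExactPair_diff_norm n).smul_extMonomial_even_eq_zero_iff (presentation n)
    (.quotient _) (diff_dvd_norm_mul_xl n) s k

end Hochschild

namespace R

variable (n : ℕ)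

/-- The class of `x` in `R n`. -/
def x : R n := Ideal.Quotient.mk (I n) (MvPolynomial.X 0)

/-- The class of `u` in `R n`. -/
def u : R n := Ideal.Quotient.mk (I n) (MvPolynomial.X 1)

/-- The class of `t` in `R n`. -/
def t : R n := Ideal.Quotient.mk (I n) (MvPolynomial.X 2)

lemma x_pow_succ : x n ^ (n + 1) = 0 :=
  Ideal.Quotient.eq_zero_iff_mem.2 <| Ideal.subset_span <| .inl rfl

lemma u_sq : u n ^ 2 = 0 :=
  Ideal.Quotient.eq_zero_iff_mem.2 <| Ideal.subset_span <| .inr <| .inl rfl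

lemma natCast_succ_mul_x_pow_mul_t : ((n : R n) + 1) * x n ^ n * t n = 0 :=
  Ideal.Quotient.eq_zero_iff_mem.2 <| Ideal.subset_span <| .inr <| .inr <| .inl rfl

lemma u_mul_x_pow : u n * x n ^ n = 0 :=
  Ideal.Quotient.eq_zero_iff_mem.2 <| Ideal.subset_span <| .inr <| .inr <| .inr rfl

/-- The structure map `A → R`, sending `x` to `x`. -/
def ofA : A n →+* R n :=
  AdjoinRoot.lift (Int.castRingHom (R n)) (x n) <| by
    rw [eval₂_pow, eval₂_X, x_pow_succ]

lemma ofA_x : ofA n (A.x n) = x n :=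
  AdjoinRoot.lift_root _

/-- The monomial `t ^ k` in degree `m = 2 * k`, and the monomial `u * t ^ k` in degree
`m = 2 * k + 1`. -/
def monomial (m : ℕ) : R n := u n ^ (m % 2) * t n ^ (m / 2)

lemma monomial_zero : monomial n 0 = 1 := by
  rw [monomial, Nat.zero_mod, Nat.zero_div, pow_zero, pow_zero, mul_one]

lemma monomial_odd (k : ℕ) : monomial n (2 * k + 1) = u n * t n ^ k := by
  rw [monomial, show (2 * k + 1) % 2 = 1 by lia, show (2 * k + 1) / 2 = k by lia, pow_one]

lemma monomial_even (k : ℕ) : monomial n (2 * k) = t n ^ k := by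
  rw [monomial, Nat.mul_mod_right, Nat.mul_div_cancel_left k two_pos, pow_zero, one_mul]

theorem monomial_mul_monomial (a b : ℕ) :
    monomial n a * monomial n b = if Odd a ∧ Odd b then 0 else monomial n (a + b) := by
  have hmul : monomial n a * monomial n b = u n ^ (a % 2 + b % 2) * t n ^ (a / 2 + b / 2) := by
    rw [monomial, monomial, mul_mul_mul_comm, ← pow_add, ← pow_add]
  rw [hmul]
  split_ifs with h
  · rw [Nat.odd_iff.1 h.1, Nat.odd_iff.1 h.2, u_sq, zero_mul]
  · rw [Nat.odd_iff, Nat.odd_iff] at h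
    rw [monomial, show a % 2 + b % 2 = (a + b) % 2 by lia,
      show a / 2 + b / 2 = (a + b) / 2 by lia]

lemma mk_monomial_eq (d : Fin 3 →₀ ℕ) (c : ℤ) :
    Ideal.Quotient.mk (I n) (MvPolynomial.monomial d c) =
      c • (x n ^ d 0 * (u n ^ d 1 * t n ^ d 2)) := by
  rw [MvPolynomial.monomial_eq, Finsupp.prod_fintype _ _ fun _ => pow_zero _, Fin.prod_univ_three,
    zsmul_eq_mul, ← mul_assoc (x n ^ _)]
  simp only [map_mul, map_pow, eq_intCast, map_intCast, x, u, t]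

lemma weight_eq (d : Fin 3 →₀ ℕ) : Finsupp.weight (![0, 1, 2] : Fin 3 → ℕ) d = d 1 + 2 * d 2 := by
  rw [Finsupp.weight_eq_sum, Fin.sum_univ_three]
  change d 0 * 0 + d 1 * 1 + d 2 * 2 = _
  lia

lemma ofA_mul_monomial_mem (m : ℕ) (a : A n) : ofA n a * monomial n m ∈ G n m := by
  obtain ⟨p, rfl⟩ := A.aeval_x_surjective n a
  induction p using Polynomial.induction_on' with
  | add p q hp hq =>
    rw [map_add, map_add, add_mul]
    exact add_mem hp hq
  | monomial j k =>
    let d : Fin 3 →₀ ℕ := Finsupp.equivFunOnFinite.symm ![j, m % 2, m / 2]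
    refine ⟨MvPolynomial.monomial d k, MvPolynomial.isWeightedHomogeneous_monomial _ _ _ ?_, ?_⟩
    · exact (weight_eq d).trans (Nat.mod_add_div m 2)
    · refine (mk_monomial_eq n d k).trans ?_
      rw [aeval_monomial, map_mul, map_pow, ofA_x, eq_intCast, map_intCast, mul_assoc, zsmul_eq_mul]
      rfl

lemma exists_ofA_mul_monomial_eq {m : ℕ} {r : R n} (hr : r ∈ G n m) :
    ∃ a : A n, ofA n a * monomial n m = r := by
  obtain ⟨q, hq, rfl⟩ := hr
  let g : A n →+ R n := (AddMonoidHom.mulRight (monomial n m)).comp (ofA n).toAddMonoidHom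
  suffices hmem : Ideal.Quotient.mk (I n) q ∈ g.range from hmem
  rw [MvPolynomial.as_sum q, map_sum]
  refine sum_mem fun d hd => ?_
  have hdeg : d 1 + 2 * d 2 = m := by
    rw [← weight_eq, hq (MvPolynomial.mem_support_iff.1 hd)]
  rw [mk_monomial_eq]
  refine zsmul_mem ?_ _
  rcases le_or_gt 2 (d 1) with hd1 | hd1
  · rw [pow_eq_zero_of_le hd1 (u_sq n), zero_mul, mul_zero]
    exact zero_mem _
  · refine ⟨A.x n ^ d 0, ?_⟩
    change ofA n (A.x n ^ d 0) * monomial n m = _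
    rw [map_pow, ofA_x, monomial, show m % 2 = d 1 by lia, show m / 2 = d 2 by lia]

section Lift

variable {n} {T : Type*} [CommRing T] (φ : A n →+* T) {b c : T} (hu : b ^ 2 = 0)
  (ht : φ (((n : A n) + 1) * A.x n ^ n) * c = 0) (hux : b * φ (A.x n ^ n) = 0)

/-- The homomorphism out of `R n` which extends `φ` along `ofA` and sends `u` to `b`, `t` to `c`. -/
def lift : R n →+* T :=
  Ideal.Quotient.lift (I n) (MvPolynomial.aeval ![φ (A.x n), b, c] : _ →ₐ[ℤ] T) <| by
    change I n ≤ RingHom.ker (MvPolynomial.aeval ![φ (A.x n), b, c] : _ →ₐ[ℤ] T)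
    have hx : φ (A.x n) ^ (n + 1) = 0 := by rw [← map_pow, A.x_pow_succ, map_zero]
    simp only [map_mul, map_add, map_pow, map_natCast, map_one] at ht hux
    rw [I, Ideal.span_le]
    rintro p (rfl | rfl | rfl | rfl) <;>
      simp only [SetLike.mem_coe, RingHom.mem_ker, map_mul, map_add, map_pow, map_natCast, map_one,
        MvPolynomial.aeval_X]
    exacts [hx, hu, ht, hux]

lemma lift_ofA (a : A n) : lift φ hu ht hux (ofA n a) = φ a := by
  have hx : lift φ hu ht hux (x n) = φ (A.x n) := MvPolynomial.aeval_X _ 0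
  refine RingHom.congr_fun (f := (lift φ hu ht hux).comp (ofA n))
    (AdjoinRoot.ringHom_ext (RingHom.ext_int _ _) ?_) a
  rw [RingHom.comp_apply, ofA_x, hx]

lemma lift_monomial (m : ℕ) :
    lift φ hu ht hux (monomial n m) = b ^ (m % 2) * c ^ (m / 2) := by
  have hu' : lift φ hu ht hux (u n) = b := MvPolynomial.aeval_X _ 1
  have ht' : lift φ hu ht hux (t n) = c := MvPolynomial.aeval_X _ 2
  rw [monomial, map_mul, map_pow, map_pow, hu', ht']

end Lift

lemma ofA_injective : Function.Injective (ofA n) :=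
  Function.LeftInverse.injective <|
    lift_ofA (RingHom.id (A n)) (b := 0) (c := 0) (zero_pow two_ne_zero) (mul_zero _) (zero_mul _)

lemma map_mul_pow_eq_zero_of_ofA_mul_monomial_eq_zero {T : Type*} [CommRing T] (φ : A n →+* T)
    {b : T} (hb : b ^ 2 = 0) (hφ : φ (((n : A n) + 1) * A.x n ^ n) = 0)
    (hbφ : b * φ (A.x n ^ n) = 0) {m : ℕ} {a : A n} (ha : ofA n a * monomial n m = 0) :
    φ a * b ^ (m % 2) = 0 := by
  -- Sending `t` to a polynomial variable over `T` separates the powers of `t`.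
  have hu : C b ^ 2 = 0 := by rw [← C_pow, hb, C_0]
  have ht : C.comp φ (((n : A n) + 1) * A.x n ^ n) * X = 0 := by
    rw [RingHom.comp_apply, hφ, C_0, zero_mul]
  have hux : C b * C.comp φ (A.x n ^ n) = 0 := by rw [RingHom.comp_apply, ← C_mul, hbφ, C_0]
  have hlift : C (φ a * b ^ (m % 2)) * X ^ (m / 2) = 0 := by
    calc C (φ a * b ^ (m % 2)) * X ^ (m / 2)
        = lift (C.comp φ) hu ht hux (ofA n a * monomial n m) := by
          rw [map_mul, map_mul, lift_ofA, lift_monomial, RingHom.comp_apply, C_pow, mul_assoc]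
      _ = 0 := by rw [ha, map_zero]
  simpa only [coeff_C_mul, coeff_X_pow_self, mul_one, coeff_zero] using
    congrArg (coeff · (m / 2)) hlift

theorem ofA_mul_monomial_zero_eq_zero_iff (a : A n) : ofA n a * monomial n 0 = 0 ↔ a = 0 := by
  rw [monomial_zero, mul_one, map_eq_zero_iff _ (ofA_injective n)]

theorem ofA_mul_monomial_even_eq_zero_iff (a : A n) (k : ℕ) :
    ofA n a * monomial n (2 * k + 2) = 0 ↔ ((n : A n) + 1) * A.x n ^ n ∣ a := by
  constructor
  · intro ha
    let J : Ideal (A n) := Ideal.span {((n : A n) + 1) * A.x n ^ n}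
    have hJ := map_mul_pow_eq_zero_of_ofA_mul_monomial_eq_zero n (Ideal.Quotient.mk J)
      (zero_pow two_ne_zero)
      (Ideal.Quotient.eq_zero_iff_mem.2 (Ideal.mem_span_singleton_self _)) (zero_mul _) ha
    rw [show (2 * k + 2) % 2 = 0 by lia, pow_zero, mul_one] at hJ
    exact Ideal.mem_span_singleton.1 (Ideal.Quotient.eq_zero_iff_mem.1 hJ)
  · rintro ⟨c, rfl⟩
    calc ofA n (((n : A n) + 1) * A.x n ^ n * c) * monomial n (2 * k + 2)
        = ofA n c * (((n : R n) + 1) * x n ^ n * t n) * t n ^ k := by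
          rw [← mul_add_one, monomial_even, map_mul, map_mul, map_pow, ofA_x, map_add, map_natCast,
            map_one]
          ring
      _ = 0 := by rw [natCast_succ_mul_x_pow_mul_t, mul_zero, zero_mul]

theorem ofA_mul_monomial_odd_eq_zero_iff (a : A n) (k : ℕ) :
    ofA n a * monomial n (2 * k + 1) = 0 ↔ A.x n ^ n ∣ a := by
  constructor
  · intro ha
    let J : Ideal (A n) := Ideal.span {A.x n ^ n}
    let φ : A n →+* DualNumber (A n ⧸ J) :=
      (TrivSqZeroExt.inlHom (A n ⧸ J) (A n ⧸ J)).comp (Ideal.Quotient.mk J)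
    have hφ : φ (A.x n ^ n) = 0 := by
      have hx : Ideal.Quotient.mk J (A.x n ^ n) = 0 :=
        Ideal.Quotient.eq_zero_iff_mem.2 (Ideal.mem_span_singleton_self _)
      rw [RingHom.comp_apply, hx, map_zero]
    have hε := map_mul_pow_eq_zero_of_ofA_mul_monomial_eq_zero n φ (b := DualNumber.eps)
      DualNumber.eps_pow_two (by rw [map_mul, hφ, mul_zero])
      (by rw [hφ, mul_zero]) ha
    rw [show (2 * k + 1) % 2 = 1 by lia, pow_one] at hε
    have hJ : Ideal.Quotient.mk J a = 0 := by
      simpa [φ] using congrArg TrivSqZeroExt.snd hε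
    exact Ideal.mem_span_singleton.1 (Ideal.Quotient.eq_zero_iff_mem.1 hJ)
  · rintro ⟨c, rfl⟩
    calc ofA n (A.x n ^ n * c) * monomial n (2 * k + 1)
        = ofA n c * (u n * x n ^ n) * t n ^ k := by
          rw [monomial_odd, map_mul, map_pow, ofA_x]
          ring
      _ = 0 := by rw [u_mul_x_pow, mul_zero, zero_mul]

end R

lemma exists_addEquiv_of_ker_eq {X Y Z : Type*} [AddCommGroup X] [AddCommGroup Y] [AddCommGroup Z]
    {f : X →+ Y} {g : X →+ Z} (hf : Function.Surjective f) (hg : Function.Surjective g)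
    (hker : f.ker = g.ker) : ∃ e : Y ≃+ Z, ∀ x, e (f x) = g x := by
  let ef := QuotientAddGroup.quotientKerEquivOfSurjective f hf
  let eg := QuotientAddGroup.quotientKerEquivOfSurjective g hg
  refine ⟨(ef.symm.trans (QuotientAddGroup.quotientAddEquivOfEq hker)).trans eg, fun x => ?_⟩
  have hef : ef.symm (f x) = (x : X ⧸ f.ker) := ef.symm_apply_eq.2 rfl
  rw [AddEquiv.trans_apply, AddEquiv.trans_apply, hef]
  rfl

namespace Hochschild

variable (n : ℕ)

lemma smul_monomial_eq_zero_iff (m : ℕ) (s : B n) :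
    s • monomial n m = 0 ↔ R.ofA n (algebraMap (B n) (A n) s) * R.monomial n m = 0 := by
  rcases m.even_or_odd' with ⟨_ | k, rfl | rfl⟩
  · rw [mul_zero, smul_monomial_zero_eq_zero_iff, R.ofA_mul_monomial_zero_eq_zero_iff]
  · rw [smul_monomial_odd_eq_zero_iff, R.ofA_mul_monomial_odd_eq_zero_iff]
  · rw [mul_add_one, smul_monomial_even_eq_zero_iff, R.ofA_mul_monomial_even_eq_zero_iff]
  · rw [smul_monomial_odd_eq_zero_iff, R.ofA_mul_monomial_odd_eq_zero_iff]

theorem exists_addEquiv (m : ℕ) :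
    ∃ e : Abelian.Ext (M n) (M n) m ≃+ G n m, ∀ s : B n,
      (e (s • monomial n m) : R n) = R.ofA n (algebraMap (B n) (A n) s) * R.monomial n m := by
  let f : B n →+ Abelian.Ext (M n) (M n) m := AddMonoidHom.flip (smulAddHom (B n) _) (monomial n m)
  let g : B n →+ G n m :=
    ((AddMonoidHom.mulRight (R.monomial n m)).comp
      ((R.ofA n).comp (algebraMap (B n) (A n))).toAddMonoidHom).codRestrict
      (G n m) fun s => R.ofA_mul_monomial_mem n m _
  have hf : Function.Surjective f := exists_smul_monomial_eq n
  have hg : Function.Surjective g := fun ⟨r, hr⟩ => by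
    obtain ⟨a, ha⟩ := R.exists_ofA_mul_monomial_eq n hr
    obtain ⟨s, rfl⟩ := B.algebraMap_surjective n a
    exact ⟨s, Subtype.ext ha⟩
  have hker : f.ker = g.ker := AddSubgroup.ext fun s =>
    (smul_monomial_eq_zero_iff n m s).trans (Subtype.ext_iff (a1 := g s) (a2 := 0)).symm
  obtain ⟨e, he⟩ := exists_addEquiv_of_ker_eq hf hg hker
  exact ⟨e, fun s => congrArg Subtype.val (he s)⟩

end Hochschild

/-- the graded ring `HH^*(A;A) = ⊕ₘ Ext^m_B(A,A)` with the Yoneda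
(composition) product is isomorphic as a graded ring to
`ℤ[x,u,t]/(x^{n+1}, u², (n+1)xⁿt, uxⁿ)` with `x, u, t` in degrees `0, 1, 2`:
there are degreewise additive isomorphisms onto the graded components of the target ring,
sending the identity to `1` and intertwining the Yoneda product with the ring product. -/
theorem stmt7 (n : ℕ) (hn : 1 ≤ n) :
    ∃ e : ∀ m : ℕ, Abelian.Ext (M n) (M n) m ≃+ G n m,
      ((e 0 (Abelian.Ext.mk₀ (𝟙 (M n))) : R n) = 1) ∧
      ∀ (a b : ℕ) (α : Abelian.Ext (M n) (M n) a) (β : Abelian.Ext (M n) (M n) b),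
        ((e (a + b) (α.comp β rfl) : R n) = (e a α : R n) * (e b β : R n)) := by
  choose e he using Hochschild.exists_addEquiv n
  refine ⟨e, ?_, fun a b α β => ?_⟩
  · have hone := he 0 1
    rw [one_smul, map_one, map_one, R.monomial_zero, one_mul] at hone
    exact hone
  · obtain ⟨s, rfl⟩ := Hochschild.exists_smul_monomial_eq n α
    obtain ⟨s', rfl⟩ := Hochschild.exists_smul_monomial_eq n β
    rw [Hochschild.smul_monomial_comp_smul_monomial, he, he, mul_mul_mul_comm,
      R.monomial_mul_monomial]
    split_ifs
    · rw [map_zero, mul_zero, ZeroMemClass.coe_zero]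
    · rw [he, map_mul, map_mul]

end
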